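/- (Quantitative version of Lemma 5.5) Let u : Θ → ℝ be bounded and d_p-uniformly continuous with modulus ρ^u. Then there exists a constant C, depending only on T, p and ‖u‖_∞, such that for every n ≥ 1: u(0,0) ≤ u^n(0,0) ≤ u(0,0) + ρ^u( C ( n^{−(3p+3)/2} + n^{−1/(p+1)} ) ), where (0,0) denotes the point of Θ with t = 0 and ω the constant zero path. -/

import Mathlib

open MeasureTheory Set Filter Topology

noncomputable section

/-- `ℝ^d` with the Euclidean norm. -/
abbrev E (d : ℕ) := EuclideanSpace ℝ (Fin d)

/-- A point `θ = (t, ω)` of `Θ = [0,T] × Ω`, where `Ω` is the set of continuous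
paths `[0,T] → ℝ^d` starting from the origin. -/
structure Theta (T : ℝ) (d : ℕ) where
  t : ℝ
  path : ℝ → E d
  ht : t ∈ Set.Icc 0 T
  cont : ContinuousOn path (Set.Icc 0 T)
  init : path 0 = 0

/-- `‖f‖_q^q := ‖f T‖^q + ∫_0^T ‖f s‖^q ds`. -/
def pnormPow (T q : ℝ) {d : ℕ} (f : ℝ → E d) : ℝ :=
  ‖f T‖ ^ q + ∫ s in (0:ℝ)..T, ‖f s‖ ^ q

/-- `‖f‖_q := (‖f T‖^q + ∫_0^T ‖f s‖^q ds)^(1/q)`. -/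
def pnorm (T q : ℝ) {d : ℕ} (f : ℝ → E d) : ℝ := (pnormPow T q f) ^ (1 / q)

/-- The pseudo-distance `d_p(θ,θ') = |t - t'| + ‖ω_{t∧·} - ω'_{t'∧·}‖_p`. -/
def dpDist (T p : ℝ) {d : ℕ} (θ θ' : Theta T d) : ℝ :=
  |θ.t - θ'.t| + pnorm T p (fun s => θ.path (min θ.t s) - θ'.path (min θ'.t s))

/-- The set `𝓛_{t,s}` of monotone time changes: for `s > 0`, nondecreasing
`ℓ : [0,T] → ℝ` restricting to an increasing bijection from `[0,t]` onto `[0,s]`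
with `ℓ(r) = r - t + s` on `(t,T]`; for `s = 0` the single function `ℓ^{t,0}`. -/
def LL (T t s : ℝ) : Set (ℝ → ℝ) :=
  if s = 0 then {fun r => if r ≤ t then 0 else r - t}
  else {ℓ | MonotoneOn ℓ (Set.Icc 0 T) ∧ StrictMonoOn ℓ (Set.Icc 0 t) ∧
        Set.BijOn ℓ (Set.Icc 0 t) (Set.Icc 0 s) ∧ ∀ r ∈ Set.Ioc t T, ℓ r = r - t + s}

/-- `‖ℓ - I‖_∞ := sup_{0 ≤ r ≤ T} |ℓ(r) - r|`. -/
def supId (T : ℝ) (ℓ : ℝ → ℝ) : ℝ := ⨆ r : Set.Icc (0:ℝ) T, |ℓ r - (r : ℝ)|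

/-- The penalization `Φ(s,η,θ,ℓ) := ‖ℓ - I‖_∞^{2/(3p+3)} + ‖η_{s∧ℓ(·)} - ω_{t∧·}‖_{p+1}^{p+1}`. -/
def Phi (T p : ℝ) {d : ℕ} (s : ℝ) (η : ℝ → E d) (θ : Theta T d) (ℓ : ℝ → ℝ) : ℝ :=
  (supId T ℓ) ^ (2 / (3 * p + 3)) +
    pnormPow T (p + 1) (fun r => η (min s (ℓ r)) - θ.path (min θ.t r))

/-- The regularization
`u^n(s,η) := sup { u(θ) - n Φ(s,η,θ,ℓ) : θ ∈ Θ \ {𝟎}, ℓ ∈ 𝓛_{t,s} }`. -/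
def reg (T p : ℝ) {d : ℕ} (u : Theta T d → ℝ) (n : ℕ) (s : ℝ) (η : ℝ → E d) : ℝ :=
  sSup { x | ∃ θ : Theta T d, ∃ ℓ : ℝ → ℝ, (θ.t, θ.path) ≠ (0, 0) ∧ ℓ ∈ LL T θ.t s ∧
        x = u θ - (n : ℝ) * Phi T p s η θ ℓ }

/-- A càdlàg path on `[0,T]`: right-continuous with left limits. -/
def Cadlag (T : ℝ) {d : ℕ} (η : ℝ → E d) : Prop :=
  (∀ x ∈ Set.Ico (0:ℝ) T, ContinuousWithinAt η (Set.Ici x) x) ∧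
  (∀ x ∈ Set.Ioc (0:ℝ) T, ∃ l : E d, Filter.Tendsto η (nhdsWithin x (Set.Iio x)) (𝓝 l))

/-- The piecewise constant path `η^{λ_i}(x)_s = Σ_j x_j 1_{{s ≥ s_j}}`. -/
def pcPath {d i : ℕ} (sVec : Fin i → ℝ) (xVec : Fin i → E d) : ℝ → E d :=
  fun r => ∑ j : Fin i, if sVec j ≤ r then xVec j else 0

/-!
At the origin the only admissible time change from `θ = (t, ω)` is `ℓ^{t,0}`, and
`‖ℓ^{t,0} - I‖_∞ = t`, so the penalty is `t^{2/(3p+3)} + ‖ω_{t∧·}‖_{p+1}^{p+1}`.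

Lower bound: the points `(t, 0)` with `t ↓ 0` are admissible competitors converging to the origin,
and their penalty `t^{2/(3p+3)}` vanishes.

Upper bound: a competitor whose value exceeds `u(0,0)` has penalty at most `K / n`, where `K` bounds
`u - u(0,0)` from above. Hence `t ≤ (K/n)^{(3p+3)/2}` and `‖ω_{t∧·}‖_{p+1} ≤ (K/n)^{1/(p+1)}`.
Hölder's inequality for the measure `ds|_{[0,T]} + δ_T`, whose `L^q` norm is `‖·‖_q`, turns this
into a bound on the `d_p`-distance to the origin, and the modulus of continuity concludes.
-/

lemma div_rpow_add_mul_div_rpow_le {K n L : ℝ} (hK : 0 ≤ K) (hn : 0 ≤ n) (hL : 0 ≤ L) (a b : ℝ) :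
    (K / n) ^ a + L * (K / n) ^ b ≤ (K ^ a + L * K ^ b) * (n ^ (-a) + n ^ (-b)) := by
  have hdiv (c : ℝ) : (K / n) ^ c = K ^ c * n ^ (-c) := by
    rw [Real.div_rpow hK hn, Real.rpow_neg hn, div_eq_mul_inv]
  have hcross : 0 ≤ K ^ a * n ^ (-b) + L * K ^ b * n ^ (-a) := by positivity
  rw [hdiv, hdiv]
  linarith

section Pnorm

variable {T p q : ℝ} {d : ℕ} {f : ℝ → E d}

/-- The measure `ds|_{[0,T]} + δ_T`, for which `pnorm T q` is the `L^q` norm. -/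
def pnormMeasure (T : ℝ) : Measure ℝ := volume.restrict (Ioc 0 T) + Measure.dirac T

instance : IsFiniteMeasure (pnormMeasure T) := by
  unfold pnormMeasure
  infer_instance

lemma pnormMeasure_univ (hT : 0 ≤ T) : pnormMeasure T univ = ENNReal.ofReal (1 + T) := by
  simp [pnormMeasure, ENNReal.ofReal_add, hT, add_comm]

lemma pnormMeasure_restrict_Icc (hT : 0 ≤ T) :
    (pnormMeasure T).restrict (Icc 0 T) = pnormMeasure T := by
  refine Measure.restrict_eq_self_of_ae_mem ?_
  rw [pnormMeasure, ae_add_measure_iff, ae_dirac_iff (p := (· ∈ Icc 0 T)) measurableSet_Icc]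
  exact ⟨(ae_restrict_mem measurableSet_Ioc).mono fun _ h => Ioc_subset_Icc_self h,
    right_mem_Icc.2 hT⟩

lemma memLp_pnormMeasure_of_continuousOn (hT : 0 ≤ T) (hf : ContinuousOn f (Icc 0 T))
    (r : ENNReal) : MemLp f r (pnormMeasure T) := by
  obtain ⟨C, hC⟩ := isCompact_Icc.exists_bound_of_continuousOn hf
  rw [← pnormMeasure_restrict_Icc hT]
  exact .of_bound (hf.aestronglyMeasurable measurableSet_Icc) C
    ((ae_restrict_mem measurableSet_Icc).mono hC)

lemma pnormPow_nonneg (hT : 0 ≤ T) (q : ℝ) (f : ℝ → E d) : 0 ≤ pnormPow T q f :=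
  add_nonneg (by positivity) (intervalIntegral.integral_nonneg hT fun _ _ => by positivity)

lemma pnormPow_zero (hq : q ≠ 0) : pnormPow T q (0 : ℝ → E d) = 0 := by
  simp [pnormPow, Real.zero_rpow hq]

lemma pnorm_zero (hq : q ≠ 0) : pnorm T q (0 : ℝ → E d) = 0 := by
  rw [pnorm, pnormPow_zero hq, Real.zero_rpow (one_div_ne_zero hq)]

lemma pnormPow_eq_integral (hT : 0 ≤ T) (hf : Integrable (fun s => ‖f s‖ ^ q) (pnormMeasure T)) :
    pnormPow T q f = ∫ s, ‖f s‖ ^ q ∂pnormMeasure T := by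
  rw [pnormMeasure, integrable_add_measure] at hf
  rw [pnormPow, pnormMeasure, integral_add_measure hf.1 hf.2, integral_dirac,
    intervalIntegral.integral_of_le hT, add_comm]

lemma eLpNorm_pnormMeasure (hT : 0 ≤ T) (hq : 0 < q)
    (hf : MemLp f (ENNReal.ofReal q) (pnormMeasure T)) :
    eLpNorm f (ENNReal.ofReal q) (pnormMeasure T) = ENNReal.ofReal (pnorm T q f) := by
  have hint := hf.integrable_norm_rpow'
  rw [ENNReal.toReal_ofReal hq.le] at hint
  rw [hf.eLpNorm_eq_integral_rpow_norm (by simpa using hq) ENNReal.ofReal_ne_top,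
    ENNReal.toReal_ofReal hq.le, ← pnormPow_eq_integral hT hint, pnorm, one_div]

lemma pnorm_le_rpow_mul_pnorm (hT : 0 ≤ T) (hp : 0 < p) (hpq : p ≤ q)
    (hf : MemLp f (ENNReal.ofReal q) (pnormMeasure T)) :
    pnorm T p f ≤ (1 + T) ^ (1 / p - 1 / q) * pnorm T q f := by
  have hq : 0 < q := hp.trans_le hpq
  have hpq' : ENNReal.ofReal p ≤ ENNReal.ofReal q := ENNReal.ofReal_le_ofReal hpq
  have hpnorm : 0 ≤ pnorm T q f := Real.rpow_nonneg (pnormPow_nonneg hT q f) _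
  have hHolder := eLpNorm_le_eLpNorm_mul_rpow_measure_univ hpq' hf.aestronglyMeasurable
  rw [mul_comm]
  rwa [eLpNorm_pnormMeasure hT hp (hf.mono_exponent hpq'), eLpNorm_pnormMeasure hT hq hf,
    pnormMeasure_univ hT, ENNReal.toReal_ofReal hp.le, ENNReal.toReal_ofReal hq.le,
    ENNReal.ofReal_rpow_of_pos (by positivity), ← ENNReal.ofReal_mul hpnorm,
    ENNReal.ofReal_le_ofReal_iff (by positivity)] at hHolder

end Pnorm

namespace Theta

variable {T t p : ℝ} {d : ℕ}

lemma horizon_nonneg (θ : Theta T d) : 0 ≤ T := θ.ht.1.trans θ.ht.2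

/-- The stopped path `ω_{t∧·}` of `θ = (t, ω)`. -/
def stoppedPath (θ : Theta T d) : ℝ → E d := fun r => θ.path (min θ.t r)

lemma continuousOn_stoppedPath (θ : Theta T d) : ContinuousOn θ.stoppedPath (Icc 0 T) :=
  θ.cont.comp (by fun_prop) fun _ hr => ⟨le_min θ.ht.1 hr.1, (min_le_left _ _).trans θ.ht.2⟩

/-- The point `(t, 0)` of `Θ`, with the constant zero path. -/
def zeroPath (d : ℕ) (ht : t ∈ Icc 0 T) : Theta T d := ⟨t, 0, ht, continuousOn_const, rfl⟩

/-- The point `(0, 0)` of `Θ`. -/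
def origin (d : ℕ) (hT : 0 ≤ T) : Theta T d := zeroPath d (left_mem_Icc.2 hT)

lemma dpDist_origin (hT : 0 ≤ T) (θ : Theta T d) :
    dpDist T p θ (origin d hT) = θ.t + pnorm T p θ.stoppedPath := by
  unfold stoppedPath
  simp [dpDist, origin, zeroPath, abs_of_nonneg θ.ht.1]

lemma dpDist_zeroPath_origin (hT : 0 ≤ T) (ht : t ∈ Icc 0 T) (hp : p ≠ 0) :
    dpDist T p (zeroPath d ht) (origin d hT) = t := by
  rw [dpDist_origin]
  exact add_eq_left.2 (pnorm_zero hp)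

end Theta

section Penalty

variable {T t p s c : ℝ} {d : ℕ} {θ : Theta T d} {η : ℝ → E d} {ℓ : ℝ → ℝ}

lemma LL_zero : LL T t 0 = {fun r => if r ≤ t then 0 else r - t} := if_pos rfl

lemma supId_nonneg (T : ℝ) (ℓ : ℝ → ℝ) : 0 ≤ supId T ℓ :=
  Real.iSup_nonneg fun _ => abs_nonneg _

lemma supId_of_mem_LL_zero (ht : t ∈ Icc 0 T) (hℓ : ℓ ∈ LL T t 0) : supId T ℓ = t := by
  rw [LL_zero, mem_singleton_iff] at hℓ
  have habs (r : Icc (0 : ℝ) T) : |ℓ r - r| = min (r : ℝ) t := by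
    rcases le_or_gt (r : ℝ) t with hr | hr
    · simp [hℓ, hr, abs_of_nonneg r.2.1]
    · simp [hℓ, hr.not_ge, hr.le, abs_of_nonneg ht.1]
  have hbdd : BddAbove (range fun r : Icc (0 : ℝ) T => min (r : ℝ) t) :=
    ⟨t, forall_mem_range.2 fun _ => min_le_right _ _⟩
  have : Nonempty (Icc (0 : ℝ) T) := ⟨⟨t, ht⟩⟩
  simp only [supId, habs]
  exact le_antisymm (ciSup_le fun _ => min_le_right _ _)
    ((min_self t).ge.trans (le_ciSup hbdd ⟨t, ht⟩))

lemma Phi_nonneg : 0 ≤ Phi T p s η θ ℓ :=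
  add_nonneg (Real.rpow_nonneg (supId_nonneg T ℓ) _) (pnormPow_nonneg θ.horizon_nonneg _ _)

lemma Phi_zero_of_mem_LL (hℓ : ℓ ∈ LL T θ.t 0) :
    Phi T p 0 0 θ ℓ = θ.t ^ (2 / (3 * p + 3)) + pnormPow T (p + 1) θ.stoppedPath := by
  rw [Phi, supId_of_mem_LL_zero θ.ht hℓ]
  simp [pnormPow, Theta.stoppedPath]

lemma dpDist_origin_le_of_Phi_le (hT : 0 ≤ T) (hp : 0 < p) (hℓ : ℓ ∈ LL T θ.t 0)
    (hΦ : Phi T p 0 0 θ ℓ ≤ c) :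
    dpDist T p θ (.origin d hT) ≤ c ^ ((3 * p + 3) / 2) +
      (1 + T) ^ (1 / p - 1 / (p + 1)) * c ^ (1 / (p + 1)) := by
  have htime_nonneg : 0 ≤ θ.t ^ (2 / (3 * p + 3)) := Real.rpow_nonneg θ.ht.1 _
  have hpath_nonneg : 0 ≤ pnormPow T (p + 1) θ.stoppedPath := pnormPow_nonneg hT _ _
  rw [Phi_zero_of_mem_LL hℓ] at hΦ
  have htime : θ.t ≤ c ^ ((3 * p + 3) / 2) := by
    rw [← inv_div 2 (3 * p + 3)]
    exact (Real.le_rpow_inv_iff_of_pos θ.ht.1 (by linarith) (by positivity)).2 (by linarith)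
  have hpath : pnorm T (p + 1) θ.stoppedPath ≤ c ^ (1 / (p + 1)) :=
    Real.rpow_le_rpow hpath_nonneg (by linarith) (by positivity)
  rw [Theta.dpDist_origin]
  refine add_le_add htime ((pnorm_le_rpow_mul_pnorm hT hp (le_add_of_nonneg_right zero_le_one)
    (memLp_pnormMeasure_of_continuousOn hT θ.continuousOn_stoppedPath _)).trans ?_)
  gcongr

end Penalty

section Regularization

variable {T p s x : ℝ} {d n : ℕ} {u : Theta T d → ℝ} {η : ℝ → E d} {ρ : ℝ → ℝ}

lemma sub_mul_Phi_le_reg (hu : BddAbove (range u)) {θ : Theta T d} {ℓ : ℝ → ℝ}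
    (hθ : (θ.t, θ.path) ≠ (0, 0)) (hℓ : ℓ ∈ LL T θ.t s) :
    u θ - n * Phi T p s η θ ℓ ≤ reg T p u n s η := by
  obtain ⟨M, hM⟩ := hu
  refine le_csSup ⟨M, ?_⟩ ⟨θ, ℓ, hθ, hℓ, rfl⟩
  rintro _ ⟨θ', ℓ', -, -, rfl⟩
  exact (sub_le_self _ (mul_nonneg n.cast_nonneg Phi_nonneg)).trans (hM ⟨θ', rfl⟩)

lemma apply_zeroPath_sub_le_reg_zero (hu : BddAbove (range u)) (hp : -1 < p) {t : ℝ}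
    (ht : t ∈ Icc 0 T) (ht0 : t ≠ 0) :
    u (.zeroPath d ht) - n * t ^ (2 / (3 * p + 3)) ≤ reg T p u n 0 0 := by
  have hℓ : (fun r => if r ≤ t then 0 else r - t) ∈ LL T (Theta.zeroPath d ht).t 0 :=
    LL_zero.ge rfl
  have hpow : pnormPow T (p + 1) (Theta.zeroPath d ht).stoppedPath = 0 :=
    pnormPow_zero (by linarith)
  have hle := sub_mul_Phi_le_reg (p := p) (n := n) (η := 0) hu
    (fun h => ht0 (congrArg Prod.fst h)) hℓ
  rwa [Phi_zero_of_mem_LL hℓ, hpow, add_zero] at hle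

lemma le_reg_zero (hT : 0 < T) (hp : 0 < p) (hu : BddAbove (range u))
    (hρ0 : Tendsto ρ (𝓝[>] 0) (𝓝 0))
    (huρ : ∀ θ, u (.origin d hT.le) - u θ ≤ ρ (dpDist T p θ (.origin d hT.le))) :
    u (.origin d hT.le) ≤ reg T p u n 0 0 := by
  have hα : 0 < 2 / (3 * p + 3) := by positivity
  have hpow : Tendsto (fun t : ℝ => t ^ (2 / (3 * p + 3))) (𝓝[>] 0) (𝓝 0) := by
    simpa [Real.zero_rpow hα.ne'] using
      ((Real.continuous_rpow_const hα.le).tendsto 0).mono_left nhdsWithin_le_nhds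
  have hlim : Tendsto (fun t => u (.origin d hT.le) - ρ t - n * t ^ (2 / (3 * p + 3)))
      (𝓝[>] 0) (𝓝 (u (.origin d hT.le))) := by
    simpa using (tendsto_const_nhds.sub hρ0).sub (hpow.const_mul (n : ℝ))
  refine le_of_tendsto hlim ?_
  filter_upwards [Ioc_mem_nhdsGT hT] with t ht
  have ht' : t ∈ Icc 0 T := Ioc_subset_Icc_self ht
  have hut := huρ (.zeroPath d ht')
  rw [Theta.dpDist_zeroPath_origin _ _ hp.ne'] at hut
  linarith [apply_zeroPath_sub_le_reg_zero (n := n) hu (by linarith : -1 < p) ht' ht.1.ne']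

lemma reg_zero_le (hT : 0 < T)
    (h : ∀ θ : Theta T d, ∀ ℓ ∈ LL T θ.t 0, u θ - n * Phi T p 0 η θ ℓ ≤ x) :
    reg T p u n 0 η ≤ x := by
  refine csSup_le ⟨_, .zeroPath d (right_mem_Icc.2 hT.le), _, ?_, LL_zero.ge rfl, rfl⟩ ?_
  · exact fun hzero => hT.ne' (congrArg Prod.fst hzero)
  · rintro _ ⟨θ, ℓ, -, hℓ, rfl⟩
    exact h θ ℓ hℓ

lemma reg_zero_le_add_modulus (hT : 0 < T) (hp : 0 < p) {K : ℝ} (hn : 0 < n)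
    (hu : ∀ θ, u θ ≤ u (.origin d hT.le) + K) (hρ : Monotone ρ)
    (huρ : ∀ θ, |u θ - u (.origin d hT.le)| ≤ ρ (dpDist T p θ (.origin d hT.le))) :
    reg T p u n 0 0 ≤ u (.origin d hT.le) + ρ ((K / n) ^ ((3 * p + 3) / 2) +
      (1 + T) ^ (1 / p - 1 / (p + 1)) * (K / n) ^ (1 / (p + 1))) := by
  have hn' : (0 : ℝ) < n := Nat.cast_pos.2 hn
  have hK : 0 ≤ K := by linarith [hu (.origin d hT.le)]
  refine reg_zero_le hT fun θ ℓ hℓ => ?_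
  have hΦ : 0 ≤ n * Phi T p 0 0 θ ℓ := mul_nonneg hn'.le Phi_nonneg
  rcases le_or_gt (u θ - n * Phi T p 0 0 θ ℓ) (u (.origin d hT.le)) with hle | hgt
  · have hρ_zero : 0 ≤ ρ 0 :=
      (abs_nonneg _).trans ((huρ _).trans_eq
        (congrArg ρ (Theta.dpDist_zeroPath_origin hT.le (left_mem_Icc.2 hT.le) hp.ne')))
    exact hle.trans (le_add_of_nonneg_right (hρ_zero.trans (hρ (by positivity))))
  · have hΦ_le : Phi T p 0 0 θ ℓ ≤ K / n := by
      rw [le_div_iff₀' hn']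
      linarith [hu θ]
    have hdist := hρ (dpDist_origin_le_of_Phi_le hT.le hp hℓ hΦ_le)
    linarith [le_abs_self (u θ - u (.origin d hT.le)), huρ θ]

end Regularization

theorem stmt5_general {T : ℝ} (hT : 0 < T) (d : ℕ) {p : ℝ} (hp : 0 < p) (K : ℝ) :
    ∃ C > 0, ∀ u : Theta T d → ℝ, (∀ θ, u θ ≤ u (.origin d hT.le) + K) →
    ∀ ρ : ℝ → ℝ, Monotone ρ → Tendsto ρ (𝓝[>] 0) (𝓝 0) →
      (∀ θ, |u θ - u (.origin d hT.le)| ≤ ρ (dpDist T p θ (.origin d hT.le))) →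
    ∀ n : ℕ, 1 ≤ n →
      u (.origin d hT.le) ≤ reg T p u n 0 0 ∧
      reg T p u n 0 0 ≤ u (.origin d hT.le) +
        ρ (C * ((n : ℝ) ^ (-((3 * p + 3) / 2)) + (n : ℝ) ^ (-(1 / (p + 1))))) := by
  have hK : K ≤ |K| + 1 := by linarith [le_abs_self K]
  refine ⟨(|K| + 1) ^ ((3 * p + 3) / 2) +
    (1 + T) ^ (1 / p - 1 / (p + 1)) * (|K| + 1) ^ (1 / (p + 1)), by positivity,
    fun u hu ρ hρ hρ0 huρ n hn => ⟨?_, ?_⟩⟩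
  · exact le_reg_zero hT hp ⟨_, forall_mem_range.2 hu⟩ hρ0 fun θ =>
      (neg_sub (u θ) _ ▸ neg_le_abs _).trans (huρ θ)
  · have hu' θ : u θ ≤ u (.origin d hT.le) + (|K| + 1) := (hu θ).trans (by gcongr)
    refine (reg_zero_le_add_modulus hT hp hn hu' hρ huρ).trans ?_
    gcongr
    exact hρ (div_rpow_add_mul_div_rpow_le (by positivity) n.cast_nonneg (by positivity) _ _)

/-- (Quantitative Lemma 5.5) There is `C > 0`, depending only on `T`, `p` and the
bound `M` on `u`, such that for every `n ≥ 1`: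
`u(𝟎) ≤ u^n(𝟎) ≤ u(𝟎) + ρ^u(C (n^{-(3p+3)/2} + n^{-1/(p+1)}))`. -/
theorem stmt5 (T : ℝ) (hT : 0 < T) (d : ℕ) (hd : 1 ≤ d) (p : ℝ) (hp : 1 ≤ p) (M : ℝ) :
    ∃ C > 0, ∀ u : Theta T d → ℝ, (∀ θ : Theta T d, |u θ| ≤ M) →
    ∀ ρ : ℝ → ℝ, Monotone ρ →
      Filter.Tendsto ρ (nhdsWithin 0 (Set.Ioi 0)) (𝓝 0) →
      (∀ θ θ' : Theta T d, |u θ - u θ'| ≤ ρ (dpDist T p θ θ')) →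
    ∀ n : ℕ, 1 ≤ n →
      u ⟨0, 0, ⟨le_rfl, hT.le⟩, continuousOn_const, rfl⟩ ≤ reg T p u n 0 (0 : ℝ → E d) ∧
      reg T p u n 0 (0 : ℝ → E d) ≤ u ⟨0, 0, ⟨le_rfl, hT.le⟩, continuousOn_const, rfl⟩
        + ρ (C * ((n : ℝ) ^ (-((3 * p + 3) / 2)) + (n : ℝ) ^ (-(1 / (p + 1))))) := by
  obtain ⟨C, hC, h⟩ := stmt5_general hT d (one_pos.trans_le hp) (2 * M)
  exact ⟨C, hC, fun u hu ρ hρ hρ0 huρ => h u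
    (fun θ => by linarith [abs_le.1 (hu θ), abs_le.1 (hu (.origin d hT.le))])
    ρ hρ hρ0 fun θ => huρ θ _⟩
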